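/- For every integer d ≥ 2 and every d-weighting α of a finite rooted tree Γ, the induced proximity relation ⤳_α satisfies the P-Enriques-diagram conditions (P1), (P2) and (P3); moreover ind_α(q) ≤ d for every vertex q, where ind_α(q) := #{p ∈ V : q ⤳_α p}. (Combinatorial counterpart of the facts that proximity among infinitely near points satisfies the Enriques-diagram axioms and that, in dimension d, a point may be proximate to at most d points.) -/

import Mathlib

/-- A finite rooted tree: a distinguished root, a parent map fixing the root,
and a depth function witnessing that iterating the parent map reaches the root. -/
structure PTree (V : Type) where
  root : V
  parent : V → V
  depth : V → ℕ
  parent_root : parent root = root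
  depth_root : depth root = 0
  depth_eq : ∀ v, v ≠ root → depth v = depth (parent v) + 1

namespace PTree

variable {V : Type}

/-- `r ⪰ q` : the descendancy order (`q` lies on the path from `r` to the root). -/
def desc (T : PTree V) (r q : V) : Prop := ∃ k : ℕ, T.parent^[k] r = q

/-- `r ≻ q`. -/
def sdesc (T : PTree V) (r q : V) : Prop := T.desc r q ∧ r ≠ q

/-- `r ∈ q⁺` : `r` is a child of `q`. -/
def child (T : PTree V) (r q : V) : Prop := T.parent r = q ∧ r ≠ T.root

/-- `w` is a d-weighting of `T` : each non-root vertex gets a weight in `{1,…,d}`,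
and distinct children of a common vertex get distinct weights. -/
def IsWeighting (T : PTree V) (d : ℕ) (w : V → ℕ) : Prop :=
  (∀ v, v ≠ T.root → 1 ≤ w v ∧ w v ≤ d) ∧
    ∀ r s, r ≠ T.root → s ≠ T.root → T.parent r = T.parent s → r ≠ s → w r ≠ w s

/-- The length of the path (code) from `q` up to a descendant `r`. -/
def codeLen (T : PTree V) (r q : V) : ℕ := T.depth r - T.depth q

/-- The proximity relation induced by a weighting: `r ⤳_α q` iff `r ≻ q` and the first
entry of the code of `r` over `q` differs from all the later entries.  (The `j`-th entry
of the code, `1 ≤ j ≤ k`, is the weight of `parent^[k-j] r`, where `k` is the code length.) -/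
def prox (T : PTree V) (w : V → ℕ) (r q : V) : Prop :=
  T.sdesc r q ∧ ∀ i, i + 2 ≤ T.codeLen r q →
    w (T.parent^[T.codeLen r q - 1] r) ≠ w (T.parent^[i] r)

end PTree

/-- The proximity index of `q` : the number of vertices `p` with `q ⤳ p`. -/
noncomputable def ind {V : Type} (rel : V → V → Prop) (q : V) : ℕ :=
  Nat.card {p : V // rel q p}

/-- `s(q)` : the number of children of `q` whose proximity index exceeds that of `q`. -/
noncomputable def PTree.sInd {V : Type} (T : PTree V) (rel : V → V → Prop) (q : V) : ℕ :=
  Nat.card {r : V // T.child r q ∧ ind rel q < ind rel r}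

/-- The P-Enriques-diagram conditions (P1), (P2), (P3) on a binary relation `rel`. -/
def PTree.Enriques {V : Type} (T : PTree V) (rel : V → V → Prop) : Prop :=
  (∀ q p, rel q p → T.sdesc q p) ∧
  (∀ q p, T.child q p → rel q p) ∧
  (∀ r p q, T.desc r p → T.sdesc p q → rel r q → rel p q)

/-- Condition (a): the proximity index is non-decreasing along the descendancy order. -/
def PTree.CondA {V : Type} (T : PTree V) (rel : V → V → Prop) : Prop :=
  ∀ r q, T.desc r q → ind rel q ≤ ind rel r

/-- Condition (b): whenever `r ⤳ q`, at most one child `s` of `r` satisfies `¬ s ⤳ q`. -/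
def PTree.CondB {V : Type} (T : PTree V) (rel : V → V → Prop) : Prop :=
  ∀ r q, rel r q → ∀ s s', T.child s r → T.child s' r → ¬ rel s q → ¬ rel s' q → s = s'

/-!
Map each vertex `p` to which `q` is proximate to the first entry of the code of `q` over `p`. If `q`
is proximate to two distinct vertices, both are ancestors of `q`, and the first step over the deeper
one is a later step over the other one; by proximity the two first entries differ. So the map is
injective, and `q` is proximate to at most as many vertices as there are weights.
-/

namespace PTree

variable {V : Type} {T : PTree V} {w : V → ℕ} {p q r : V}

theorem depth_parent (T : PTree V) (v : V) : T.depth (T.parent v) = T.depth v - 1 := by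
  by_cases hv : v = T.root
  · rw [hv, T.parent_root, T.depth_root]
  · rw [T.depth_eq v hv, Nat.add_sub_cancel]

theorem depth_iterate_parent (T : PTree V) (k : ℕ) (v : V) :
    T.depth (T.parent^[k] v) = T.depth v - k := by
  induction k with
  | zero => rfl
  | succ k ih => rw [Function.iterate_succ_apply', depth_parent, ih, Nat.sub_sub]

theorem eq_root_of_depth_eq_zero {v : V} (hv : T.depth v = 0) : v = T.root := by
  by_contra hne
  have := T.depth_eq v hne
  omega

theorem desc.depth_le (h : T.desc r q) : T.depth q ≤ T.depth r := by
  obtain ⟨k, rfl⟩ := h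
  exact (T.depth_iterate_parent k r).trans_le (Nat.sub_le _ _)

theorem desc.iterate_parent_codeLen (h : T.desc r q) : T.parent^[T.codeLen r q] r = q := by
  obtain ⟨k, rfl⟩ := h
  have hdepth := T.depth_iterate_parent k r
  rcases le_or_gt k (T.depth r) with hk | hk
  · rw [codeLen, hdepth, Nat.sub_sub_self hk]
  -- An iterate that overshoots the depth of `r` stays at the root.
  · have hroot : T.parent^[k] r = T.root := eq_root_of_depth_eq_zero (by omega)
    rw [hroot, codeLen, T.depth_root]
    exact eq_root_of_depth_eq_zero (by rw [depth_iterate_parent]; omega)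

theorem finite_setOf_desc (T : PTree V) (r : V) : {q | T.desc r q}.Finite :=
  ((Set.finite_Iic (T.depth r)).image fun k => T.parent^[k] r).subset fun q hq =>
    ⟨T.codeLen r q, Nat.sub_le _ _, hq.iterate_parent_codeLen⟩

theorem sdesc.codeLen_pos (h : T.sdesc r q) : 0 < T.codeLen r q := by
  refine Nat.pos_of_ne_zero fun hzero => h.2 ?_
  simpa only [hzero, Function.iterate_zero, id] using h.1.iterate_parent_codeLen

theorem codeLen_add_codeLen (hrp : T.desc r p) (hpq : T.desc p q) :
    T.codeLen p q + T.codeLen r p = T.codeLen r q := by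
  have := hrp.depth_le
  have := hpq.depth_le
  unfold codeLen
  omega

/-- For `r ≻ q`, the child of `q` on the path from `q` to `r`; its weight is the first entry of the
code of `r` over `q`. When `r ≻ q` fails the value is meaningless. -/
def firstStep (T : PTree V) (r q : V) : V := T.parent^[T.codeLen r q - 1] r

theorem sdesc.firstStep_ne_root (h : T.sdesc r q) : T.firstStep r q ≠ T.root := by
  intro hroot
  have hdepth := T.depth_iterate_parent (T.codeLen r q - 1) r
  rw [← firstStep, hroot, T.depth_root] at hdepth
  have := h.codeLen_pos
  unfold codeLen at *
  omega

theorem desc.firstStep_eq (hrp : T.desc r p) (hpq : T.sdesc p q) :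
    T.firstStep r q = T.firstStep p q := by
  rw [firstStep, ← codeLen_add_codeLen hrp hpq.1, Nat.sub_add_comm hpq.codeLen_pos,
    Function.iterate_add_apply, hrp.iterate_parent_codeLen, firstStep]

theorem child.prox (w : V → ℕ) (h : T.child q p) : T.prox w q p := by
  obtain ⟨rfl, hq⟩ := h
  have hdepth := T.depth_eq q hq
  refine ⟨⟨⟨1, rfl⟩, fun heq => ?_⟩, fun i hi => ?_⟩
  · rw [← heq] at hdepth
    omega
  · unfold codeLen at hi
    omega

theorem prox.of_desc (hrq : T.prox w r q) (hrp : T.desc r p) (hpq : T.sdesc p q) :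
    T.prox w p q := by
  refine ⟨hpq, fun i hi => ?_⟩
  have hlen := codeLen_add_codeLen hrp hpq.1
  have hne : w (T.firstStep r q) ≠ w (T.parent^[i + T.codeLen r p] r) := hrq.2 _ (by omega)
  rwa [hrp.firstStep_eq hpq, Function.iterate_add_apply, hrp.iterate_parent_codeLen] at hne

theorem enriques_prox (T : PTree V) (w : V → ℕ) : T.Enriques (T.prox w) :=
  ⟨fun _ _ h => h.1, fun _ _ h => h.prox w, fun _ _ _ hrp hpq hrq => hrq.of_desc hrp hpq⟩

theorem prox.codeLen_le_of_weight_firstStep_eq (hq : T.prox w r q) (hp : T.sdesc r p)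
    (heq : w (T.firstStep r q) = w (T.firstStep r p)) : T.codeLen r q ≤ T.codeLen r p := by
  by_contra! hlt
  have := hp.codeLen_pos
  exact hq.2 (T.codeLen r p - 1) (by omega) heq

theorem injOn_weight_firstStep (T : PTree V) (w : V → ℕ) (r : V) :
    Set.InjOn (fun q => w (T.firstStep r q)) {q | T.prox w r q} := by
  intro p hp q hq heq
  have hlen : T.codeLen r p = T.codeLen r q :=
    le_antisymm (hp.codeLen_le_of_weight_firstStep_eq hq.1 heq)
      (hq.codeLen_le_of_weight_firstStep_eq hp.1 heq.symm)
  rw [← hp.1.1.iterate_parent_codeLen, hlen, hq.1.1.iterate_parent_codeLen]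

theorem finite_setOf_prox (T : PTree V) (w : V → ℕ) (r : V) : {q | T.prox w r q}.Finite :=
  (T.finite_setOf_desc r).subset fun _ hq => hq.1.1

theorem ind_prox_le_card {S : Finset ℕ} (hS : ∀ v, v ≠ T.root → w v ∈ S) (r : V) :
    ind (T.prox w) r ≤ S.card := by
  have hmaps : ∀ q ∈ {q | T.prox w r q}, w (T.firstStep r q) ∈ (S : Set ℕ) :=
    fun _ hq => hS _ hq.1.firstStep_ne_root
  calc ind (T.prox w) r = {q | T.prox w r q}.ncard := rfl
    _ ≤ (S : Set ℕ).ncard := Set.ncard_le_ncard_of_injOn _ hmaps (T.injOn_weight_firstStep w r)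
    _ = S.card := Set.ncard_coe_finset S

end PTree

-- Since `ind` is `0` on infinite sets, its bound is accompanied by finiteness.
theorem prox_satisfies_Enriques_and_ind_le_general {V : Type} (T : PTree V) (w : V → ℕ)
    (S : Finset ℕ) (hS : ∀ v, v ≠ T.root → w v ∈ S) :
    T.Enriques (T.prox w) ∧
      ∀ q : V, {p | T.prox w q p}.Finite ∧ ind (T.prox w) q ≤ S.card :=
  ⟨T.enriques_prox w, fun q => ⟨T.finite_setOf_prox w q, PTree.ind_prox_le_card hS q⟩⟩

/-- For every `d ≥ 2` and every `d`-weighting `α` of a finite rooted tree,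
the induced proximity relation `⤳_α` satisfies the P-Enriques-diagram conditions (P1),
(P2), (P3); moreover `ind_α q ≤ d` for every vertex `q`. -/
theorem prox_satisfies_Enriques_and_ind_le {V : Type} [Fintype V] (T : PTree V)
    (d : ℕ) (hd : 2 ≤ d) (w : V → ℕ) (hw : T.IsWeighting d w) :
    T.Enriques (T.prox w) ∧ ∀ q : V, ind (T.prox w) q ≤ d := by
  have ⟨henriques, hind⟩ := prox_satisfies_Enriques_and_ind_le_general T w (Finset.Icc 1 d)
    fun v hv => Finset.mem_Icc.2 (hw.1 v hv)
  exact ⟨henriques, fun q => (hind q).2.trans_eq (Nat.card_Icc 1 d)⟩
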